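/- Let m ≥ 1 and for each l ∈ {1,…,m} let α_l < β_l be real numbers, let ψ_l, φ_l : [α_l,β_l] → (0,∞) be continuous with υ ↦ ψ_l(υ)/φ_l(υ) increasing on [α_l,β_l], and let w_l : ℝ × [α_l,β_l] → (0,∞) be continuous with continuous partial derivative ∂w_l/∂s on ℝ × [α_l,β_l], such that for every s ∈ ℝ the function υ ↦ (∂w_l/∂s)(s,υ) / w_l(s,υ) is increasing on [α_l,β_l]. Then the function s ↦ (∏_{l=1}^m ∫_{α_l}^{β_l} ψ_l(υ) w_l(s,υ) dυ) / (∏_{l=1}^m ∫_{α_l}^{β_l} φ_l(υ) w_l(s,υ) dυ) is increasing on ℝ. -/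

import Mathlib

open MeasureTheory Set intervalIntegral

/-!
For `s ≤ t`, the ratio `υ ↦ w t υ / w s υ` is increasing, because its logarithmic derivative in `t`
is increasing in `υ`. It therefore varies together with `ψ / φ`, and Chebyshev's integral inequality
for these two ratios, with weight `φ * w s`, is the cross-multiplied form of
`(∫ ψ * w s) / (∫ φ * w s) ≤ (∫ ψ * w t) / (∫ φ * w t)`. The integral inequality comes from
integrating the pointwise one over pairs `(x, y)`.
-/

theorem symmetrized_mul_le_of_monovaryOn_div {X : Type*} {S : Set X} {φ ψ u v : X → ℝ}
    (hφ : ∀ x ∈ S, 0 < φ x) (hu : ∀ x ∈ S, 0 < u x)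
    (hmono : MonovaryOn (fun x => v x / u x) (fun x => ψ x / φ x) S)
    {x y : X} (hx : x ∈ S) (hy : y ∈ S) :
    ψ x * u x * (φ y * v y) + φ x * v x * (ψ y * u y) ≤
      ψ x * v x * (φ y * u y) + φ x * u x * (ψ y * v y) := by
  have hφx := hφ x hx
  have hφy := hφ y hy
  have hux := hu x hx
  have huy := hu y hy
  have factored : ψ x * v x * (φ y * u y) + φ x * u x * (ψ y * v y) -
      (ψ x * u x * (φ y * v y) + φ x * v x * (ψ y * u y)) =
      φ x * u x * (φ y * u y) * ((v y / u y - v x / u x) * (ψ y / φ y - ψ x / φ x)) := by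
    field_simp
    ring
  have weight_pos : 0 < φ x * u x * (φ y * u y) := by positivity
  have := mul_nonneg weight_pos.le (hmono.sub_mul_sub_nonneg hx hy)
  linarith

section Chebyshev

variable {X : Type*} [MeasurableSpace X] {μ : Measure X} {S : Set X}

theorem integral_mul_integral_le_of_symmetrized_le {f g h k : X → ℝ}
    (hf : Integrable f μ) (hg : Integrable g μ) (hh : Integrable h μ) (hk : Integrable k μ)
    (hle : ∀ᵐ x ∂μ, ∀ᵐ y ∂μ, f x * g y + g x * f y ≤ h x * k y + k x * h y) :
    (∫ x, f x ∂μ) * ∫ x, g x ∂μ ≤ (∫ x, h x ∂μ) * ∫ x, k x ∂μ := by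
  have integrable_comb {p q : X → ℝ} (hp : Integrable p μ) (hq : Integrable q μ) (a b : ℝ) :
      Integrable (fun x => a * p x + b * q x) μ :=
    (hp.const_mul a).add (hq.const_mul b)
  have integral_comb {p q : X → ℝ} (hp : Integrable p μ) (hq : Integrable q μ) (a b : ℝ) :
      ∫ x, a * p x + b * q x ∂μ = a * ∫ x, p x ∂μ + b * ∫ x, q x ∂μ := by
    rw [MeasureTheory.integral_add (hp.const_mul a) (hq.const_mul b),
      MeasureTheory.integral_const_mul, MeasureTheory.integral_const_mul]
  have integrated_once : ∀ᵐ x ∂μ,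
      (∫ y, g y ∂μ) * f x + (∫ y, f y ∂μ) * g x ≤
        (∫ y, k y ∂μ) * h x + (∫ y, h y ∂μ) * k x := by
    filter_upwards [hle] with x hx
    have := integral_mono_ae (integrable_comb hg hf _ _) (integrable_comb hk hh _ _) hx
    rw [integral_comb hg hf, integral_comb hk hh] at this
    linarith
  have integrated_twice :=
    integral_mono_ae (integrable_comb hf hg _ _) (integrable_comb hh hk _ _) integrated_once
  rw [integral_comb hf hg, integral_comb hh hk] at integrated_twice
  linarith

theorem setIntegral_mul_setIntegral_le_of_monovaryOn_div {φ ψ u v : X → ℝ} (hS : MeasurableSet S)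
    (hφ : ∀ x ∈ S, 0 < φ x) (hu : ∀ x ∈ S, 0 < u x)
    (hψu : IntegrableOn (fun x => ψ x * u x) S μ) (hφu : IntegrableOn (fun x => φ x * u x) S μ)
    (hψv : IntegrableOn (fun x => ψ x * v x) S μ) (hφv : IntegrableOn (fun x => φ x * v x) S μ)
    (hmono : MonovaryOn (fun x => v x / u x) (fun x => ψ x / φ x) S) :
    (∫ x in S, ψ x * u x ∂μ) * ∫ x in S, φ x * v x ∂μ ≤
      (∫ x in S, ψ x * v x ∂μ) * ∫ x in S, φ x * u x ∂μ := by
  apply integral_mul_integral_le_of_symmetrized_le hψu hφv hψv hφu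
  filter_upwards [ae_restrict_mem hS] with x hx
  filter_upwards [ae_restrict_mem hS] with y hy
  exact symmetrized_mul_le_of_monovaryOn_div hφ hu hmono hx hy

theorem setIntegral_pos_of_forall_mem_pos {f : X → ℝ} (hS : MeasurableSet S) (hμS : μ S ≠ 0)
    (hf : IntegrableOn f S μ) (hpos : ∀ x ∈ S, 0 < f x) : 0 < ∫ x in S, f x ∂μ := by
  have subset_support : S ⊆ Function.support f := fun x hx => (hpos x hx).ne'
  rw [setIntegral_pos_iff_support_of_nonneg_ae
      (ae_restrict_of_forall_mem hS fun x hx => (hpos x hx).le) hf,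
    inter_eq_self_of_subset_right subset_support]
  exact pos_iff_ne_zero.mpr hμS

end Chebyshev

section LogarithmicDerivative

variable {D : Set ℝ}

theorem monotoneOn_div_of_logarithmic_deriv_le (hD : Convex ℝ D) {f g f' g' : ℝ → ℝ}
    (hf : ∀ s ∈ D, HasDerivWithinAt f (f' s) D s) (hg : ∀ s ∈ D, HasDerivWithinAt g (g' s) D s)
    (hfpos : ∀ s ∈ D, 0 < f s) (hgpos : ∀ s ∈ D, 0 < g s)
    (hle : ∀ s ∈ D, f' s / f s ≤ g' s / g s) : MonotoneOn (fun s => g s / f s) D := by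
  have hquot : ∀ s ∈ D, HasDerivWithinAt (fun s => g s / f s)
      ((g' s * f s - g s * f' s) / f s ^ 2) D s :=
    fun s hs => (hg s hs).div (hf s hs) (hfpos s hs).ne'
  refine monotoneOn_of_hasDerivWithinAt_nonneg hD (fun s hs => (hquot s hs).continuousWithinAt)
    (fun s hs => (hquot s (interior_subset hs)).mono interior_subset) fun s hs => ?_
  have hs := interior_subset hs
  have cross_le := (div_le_div_iff₀ (hfpos s hs) (hgpos s hs)).mp (hle s hs)
  exact div_nonneg (by linarith) (sq_nonneg _)

theorem monotoneOn_div_of_monotoneOn_logarithmic_deriv {X : Type*} [Preorder X] {S : Set X}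
    (hD : Convex ℝ D) {w w' : ℝ → X → ℝ} (hpos : ∀ s ∈ D, ∀ x ∈ S, 0 < w s x)
    (hw : ∀ s ∈ D, ∀ x ∈ S, HasDerivWithinAt (fun t => w t x) (w' s x) D s)
    (hmono : ∀ s ∈ D, MonotoneOn (fun x => w' s x / w s x) S)
    {s t : ℝ} (hs : s ∈ D) (ht : t ∈ D) (hst : s ≤ t) :
    MonotoneOn (fun x => w t x / w s x) S := by
  intro x hx y hy hxy
  have ratio_le : w s y / w s x ≤ w t y / w t x :=
    monotoneOn_div_of_logarithmic_deriv_le hD (fun r hr => hw r hr x hx)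
      (fun r hr => hw r hr y hy) (fun r hr => hpos r hr x hx) (fun r hr => hpos r hr y hy)
      (fun r hr => hmono r hr hx hy hxy) hs ht hst
  rw [div_le_div_iff₀ (hpos s hs x hx) (hpos t ht x hx)] at ratio_le
  rw [div_le_div_iff₀ (hpos s hs x hx) (hpos s hs y hy)]
  linarith

end LogarithmicDerivative

theorem quotient_product_parameter_integral_monotone_general
    {ι T : Type*} [Fintype ι] [Preorder T] {X : ι → Type*} [∀ l, MeasurableSpace (X l)]
    {μ : ∀ l, Measure (X l)} {S : ∀ l, Set (X l)}
    (hS : ∀ l, MeasurableSet (S l)) (hμS : ∀ l, μ l (S l) ≠ 0)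
    {ψ φ : ∀ l, X l → ℝ} {w : ∀ l, T → X l → ℝ}
    (hψ : ∀ l, ∀ x ∈ S l, 0 ≤ ψ l x) (hφ : ∀ l, ∀ x ∈ S l, 0 < φ l x)
    (hw : ∀ l s, ∀ x ∈ S l, 0 < w l s x)
    (hψw : ∀ l s, IntegrableOn (fun x => ψ l x * w l s x) (S l) (μ l))
    (hφw : ∀ l s, IntegrableOn (fun x => φ l x * w l s x) (S l) (μ l))
    (hmono : ∀ l ⦃s t⦄, s ≤ t →
      MonovaryOn (fun x => w l t x / w l s x) (fun x => ψ l x / φ l x) (S l)) :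
    Monotone fun s =>
      (∏ l, ∫ x in S l, ψ l x * w l s x ∂μ l) / ∏ l, ∫ x in S l, φ l x * w l s x ∂μ l := by
  have denominator_pos (l : ι) (s : T) : 0 < ∫ x in S l, φ l x * w l s x ∂μ l :=
    setIntegral_pos_of_forall_mem_pos (hS l) (hμS l) (hφw l s) fun x hx =>
      mul_pos (hφ l x hx) (hw l s x hx)
  have numerator_nonneg (l : ι) (s : T) : 0 ≤ ∫ x in S l, ψ l x * w l s x ∂μ l :=
    setIntegral_nonneg (hS l) fun x hx => mul_nonneg (hψ l x hx) (hw l s x hx).le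
  intro s t hst
  simp only [← Finset.prod_div_distrib]
  refine Finset.prod_le_prod
    (fun l _ => div_nonneg (numerator_nonneg l s) (denominator_pos l s).le) fun l _ => ?_
  rw [div_le_div_iff₀ (denominator_pos l s) (denominator_pos l t)]
  exact setIntegral_mul_setIntegral_le_of_monovaryOn_div (hS l) (hφ l) (hw l s) (hψw l s)
    (hφw l s) (hψw l t) (hφw l t) (hmono l hst)

theorem quotient_product_parameter_integral_monotone
    (m : ℕ) (hm : 1 ≤ m) (α β : Fin m → ℝ) (hαβ : ∀ l, α l < β l)
    (ψ φ : Fin m → ℝ → ℝ) (w ws : Fin m → ℝ → ℝ → ℝ)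
    (hψc : ∀ l, ContinuousOn (ψ l) (Icc (α l) (β l)))
    (hφc : ∀ l, ContinuousOn (φ l) (Icc (α l) (β l)))
    (hψpos : ∀ l, ∀ υ ∈ Icc (α l) (β l), 0 < ψ l υ)
    (hφpos : ∀ l, ∀ υ ∈ Icc (α l) (β l), 0 < φ l υ)
    (hratio : ∀ l, MonotoneOn (fun υ => ψ l υ / φ l υ) (Icc (α l) (β l)))
    (hwpos : ∀ l, ∀ s : ℝ, ∀ υ ∈ Icc (α l) (β l), 0 < w l s υ)
    (hwc : ∀ l, ContinuousOn (fun p : ℝ × ℝ => w l p.1 p.2) (univ ×ˢ Icc (α l) (β l)))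
    (hwderiv : ∀ l, ∀ s : ℝ, ∀ υ ∈ Icc (α l) (β l),
      HasDerivAt (fun t => w l t υ) (ws l s υ) s)
    (hwsc : ∀ l, ContinuousOn (fun p : ℝ × ℝ => ws l p.1 p.2) (univ ×ˢ Icc (α l) (β l)))
    (hlogmono : ∀ l, ∀ s : ℝ, MonotoneOn (fun υ => ws l s υ / w l s υ) (Icc (α l) (β l))) :
    Monotone fun s =>
      (∏ l : Fin m, ∫ υ in (α l)..(β l), ψ l υ * w l s υ) /
        (∏ l : Fin m, ∫ υ in (α l)..(β l), φ l υ * w l s υ) := by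
  have integrableOn_mul_w {χ : Fin m → ℝ → ℝ} (hχ : ∀ l, ContinuousOn (χ l) (Icc (α l) (β l)))
      (l : Fin m) (s : ℝ) : IntegrableOn (fun υ => χ l υ * w l s υ) (Icc (α l) (β l)) :=
    ((hχ l).mul ((hwc l).uncurry_left s (mem_univ s))).integrableOn_Icc
  have monotoneOn_w_div (l : Fin m) {s t : ℝ} (hst : s ≤ t) :
      MonotoneOn (fun υ => w l t υ / w l s υ) (Icc (α l) (β l)) :=
    monotoneOn_div_of_monotoneOn_logarithmic_deriv convex_univ (fun s _ => hwpos l s)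
      (fun s _ υ hυ => (hwderiv l s υ hυ).hasDerivWithinAt) (fun s _ => hlogmono l s)
      (mem_univ s) (mem_univ t) hst
  simp only [integral_of_le (hαβ _).le, ← integral_Icc_eq_integral_Ioc]
  exact quotient_product_parameter_integral_monotone_general (fun _ => measurableSet_Icc)
    (fun l => by simp [hαβ l]) (fun l υ hυ => (hψpos l υ hυ).le) hφpos hwpos
    (integrableOn_mul_w hψc) (integrableOn_mul_w hφc)
    fun l _ _ hst => (monotoneOn_w_div l hst).monovaryOn (hratio l)
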